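/- (Reconstruction of orthotropic 2D elasticity tensors.) Let C be an orthotropic 2D elasticity tensor with d'(C) ≠ 0, and set I₂ = Σᵢⱼ (d'(C) i j)² and K₃ = Σᵢⱼₖₗ d(C) i j · H(C) i j k l · d(C) k l. Then C is reconstructed from its invariants μ(C), κ(C), I₂, K₃ and its second-order covariant d'(C) by the formula C i j k l = 2μ(C)·J i j k l + κ(C)·δ i j · δ k l + ½(δ i j · d'(C) k l + d'(C) i j · δ k l) + (2K₃/I₂²)·(d'(C) i j · d'(C) k l − ½·I₂·J i j k l) for all indices i, j, k, l. -/

import Mathlib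

open Finset

noncomputable section

/-- A fourth-order tensor on `ℝ²`. -/
abbrev Tens4 := Fin 2 → Fin 2 → Fin 2 → Fin 2 → ℝ

/-- Kronecker delta on `Fin 2`. -/
def kdelta (i j : Fin 2) : ℝ := if i = j then 1 else 0

/-- The isotropic fourth-order tensor `J`. -/
def Jten (i j k l : Fin 2) : ℝ :=
  (kdelta i k * kdelta j l + kdelta i l * kdelta j k) / 2 - kdelta i j * kdelta k l / 2

/-- A 2D elasticity tensor: minor and major index symmetries. -/
def IsElas (C : Tens4) : Prop :=
  (∀ i j k l, C i j k l = C j i k l) ∧ (∀ i j k l, C i j k l = C i j l k) ∧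
    (∀ i j k l, C i j k l = C k l i j)

/-- Dilatation tensor `d(C)ᵢⱼ = Σₖ C k k i j`. -/
def dil (C : Tens4) (i j : Fin 2) : ℝ := ∑ k, C k k i j

/-- Voigt tensor `v(C)ᵢⱼ = Σₖ C k i k j`. -/
def voigt (C : Tens4) (i j : Fin 2) : ℝ := ∑ k, C k i k j

/-- Shear modulus `μ(C)`. -/
def muC (C : Tens4) : ℝ := (2 * ∑ i, voigt C i i - ∑ i, dil C i i) / 8

/-- 2D bulk modulus `κ(C)`. -/
def kappaC (C : Tens4) : ℝ := (∑ i, dil C i i) / 4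

/-- Deviatoric part `d'(C)` of the dilatation tensor. -/
def devC (C : Tens4) (i j : Fin 2) : ℝ := dil C i j - (∑ k, dil C k k) / 2 * kdelta i j

/-- Harmonic (fourth-order) part `H(C)` of the elasticity tensor. -/
def harmC (C : Tens4) (i j k l : Fin 2) : ℝ :=
  C i j k l - 2 * muC C * Jten i j k l - kappaC C * kdelta i j * kdelta k l
    - (kdelta i j * devC C k l + devC C i j * kdelta k l) / 2

/-- A 2D harmonic fourth-order tensor: totally symmetric (invariant under all
permutations of its four indices) and traceless. -/
def IsHarmonic (H : Tens4) : Prop :=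
  (∀ (σ : Equiv.Perm (Fin 4)) (v : Fin 4 → Fin 2),
      H (v (σ 0)) (v (σ 1)) (v (σ 2)) (v (σ 3)) = H (v 0) (v 1) (v 2) (v 3)) ∧
    (∀ i j : Fin 2, ∑ k, H k k i j = 0)

/-- Rotation matrix of angle `θ`. -/
def rot (θ : ℝ) : Matrix (Fin 2) (Fin 2) ℝ :=
  !![Real.cos θ, -Real.sin θ; Real.sin θ, Real.cos θ]

/-- Action `g ⋆ C` of a `2×2` matrix `g` on a fourth-order tensor `C`. -/
def act (g : Matrix (Fin 2) (Fin 2) ℝ) (C : Tens4) (i j k l : Fin 2) : ℝ :=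
  ∑ p, ∑ q, ∑ r, ∑ s, g i p * g j q * g k r * g l s * C p q r s

/-- `C` is orthotropic: in some rotated basis, the components `1112` and `1222` vanish. -/
def IsOrtho (C : Tens4) : Prop :=
  ∃ θ : ℝ, act (rot θ) C 0 0 0 1 = 0 ∧ act (rot θ) C 0 1 1 1 = 0

/-- Invariant `I₂ = ‖d'(C)‖²`. -/
def I2 (C : Tens4) : ℝ := ∑ i, ∑ j, (devC C i j) ^ 2

/-- Invariant `J₂ = ‖H(C)‖²`. -/
def J2 (C : Tens4) : ℝ := ∑ i, ∑ j, ∑ k, ∑ l, (harmC C i j k l) ^ 2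

/-- Invariant `K₃ = d(C) : H(C) : d(C)`. -/
def K3 (C : Tens4) : ℝ :=
  ∑ i, ∑ j, ∑ k, ∑ l, dil C i j * harmC C i j k l * dil C k l

open Complex Matrix
open scoped ComplexConjugate

/-!
Contract tensors with the complex isotropic vector `e = (1, i)`. Since `e · e = 0`, contracting `C`
with `e ⊗ e ⊗ e ⊗ e` kills every term containing a Kronecker delta, and leaves one complex number
`w` encoding `H(C)`; contracting with `e ⊗ ē ⊗ e ⊗ e` leaves one complex number `z` encoding
`d'(C)`. As `e` is an eigenvector of every rotation, rotating by `θ` turns `z` into `exp (2iθ) z`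
and `w` into `exp (4iθ) w`, while `C₁₁₁₂ = C₁₂₂₂ = 0` says exactly that `z` and `w` are real. For
an orthotropic `C` the rotation-invariant number `w conj(z)²` is therefore real, so `w` is a real
multiple of `z²`. That multiple is read off from `K₃ = 4 Re (w conj(z)²)` and `I₂ = 2 |z|²`, and
`z²` encodes `2 (d' ⊗ d' - (I₂ / 2) J)`.
-/

theorem re_mul_re (z w : ℂ) : z.re * w.re = ((z * w).re + (z * conj w).re) / 2 := by
  simp only [mul_re, conj_re, conj_im]
  ring

theorem exp_ofReal_mul_I_mul_conj (θ : ℝ) : exp (θ * I) * conj (exp (θ * I)) = 1 := by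
  simp [mul_conj, normSq_eq_norm_sq]

theorem im_mul_conj_sq_eq_zero {u z w : ℂ} (hu : u * conj u = 1) (hz : (u ^ 2 * z).im = 0)
    (hw : (u ^ 4 * w).im = 0) : (w * conj z ^ 2).im = 0 := by
  rw [← conj_eq_iff_im] at hz hw ⊢
  have key : w * conj z ^ 2 = (u ^ 4 * w) * (u ^ 2 * z) ^ 2 := by
    calc w * conj z ^ 2 = (u * conj u) ^ 4 * (w * conj z ^ 2) := by rw [hu, one_pow, one_mul]
      _ = (u ^ 4 * w) * conj (u ^ 2 * z) ^ 2 := by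
        rw [map_mul, map_pow]
        ring
      _ = (u ^ 4 * w) * (u ^ 2 * z) ^ 2 := by rw [hz]
  rw [key, map_mul, map_pow, hz, hw]

theorem eq_ofReal_mul_sq_of_im_mul_conj_sq_eq_zero {z w : ℂ} (hz : z ≠ 0)
    (h : (w * conj z ^ 2).im = 0) :
    w = ↑((w * conj z ^ 2).re / normSq z ^ 2) * z ^ 2 := by
  have hre : ((w * conj z ^ 2).re : ℂ) = w * conj z ^ 2 :=
    conj_eq_iff_re.mp (conj_eq_iff_im.mpr h)
  have hconj : conj z ≠ 0 := (map_ne_zero _).mpr hz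
  rw [ofReal_div, ofReal_pow, hre, ← mul_conj]
  field_simp

/-- The full contraction of a real fourth-order tensor with four complex vectors. -/
def contract (C : Tens4) (u v x y : Fin 2 → ℂ) : ℂ :=
  ∑ i, ∑ j, ∑ k, ∑ l, u i * v j * x k * y l * C i j k l

theorem contract_smul (C : Tens4) (a b c d : ℂ) (u v x y : Fin 2 → ℂ) :
    contract C (a • u) (b • v) (c • x) (d • y) = a * b * c * d * contract C u v x y := by
  simp only [contract, Pi.smul_apply, smul_eq_mul, Finset.mul_sum]
  congr! 4
  ring

theorem contract_act (g : Matrix (Fin 2) (Fin 2) ℝ) (C : Tens4) (u v x y : Fin 2 → ℂ) :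
    contract (act g C) u v x y =
      contract C (u ᵥ* g.map ofReal) (v ᵥ* g.map ofReal) (x ᵥ* g.map ofReal)
        (y ᵥ* g.map ofReal) := by
  let G := g.map ofReal
  let summand (a b : Fin 2 × Fin 2 × Fin 2 × Fin 2) : ℂ :=
    (u a.1 * G a.1 b.1) * (v a.2.1 * G a.2.1 b.2.1) * (x a.2.2.1 * G a.2.2.1 b.2.2.1) *
      (y a.2.2.2 * G a.2.2.2 b.2.2.2) * C b.1 b.2.1 b.2.2.1 b.2.2.2
  calc contract (act g C) u v x y = ∑ a, ∑ b, summand a b := by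
        simp only [contract, act, Fintype.sum_prod_type, ofReal_sum, ofReal_mul, Finset.mul_sum]
        congr! 8
        simp only [summand, G, map_apply]
        ring
    _ = ∑ b, ∑ a, summand a b := Finset.sum_comm
    _ = contract C (u ᵥ* G) (v ᵥ* G) (x ᵥ* G) (y ᵥ* G) := by
        simp only [summand, contract, vecMul, dotProduct, Fintype.sum_prod_type, ← Finset.mul_sum,
          ← Finset.sum_mul]

/-- The isotropic vector `e = (1, i)`: it satisfies `e · e = 0`, and it and its conjugate are the
common eigenvectors of all plane rotations. -/
def isoVec : Fin 2 → ℂ := ![1, I]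

@[simp]
theorem isoVec_zero : isoVec 0 = 1 := rfl

@[simp]
theorem isoVec_one : isoVec 1 = I := rfl

theorem isoVec_vecMul_rot (θ : ℝ) :
    isoVec ᵥ* (rot θ).map ofReal = exp (θ * I) • isoVec := by
  ext i
  fin_cases i
  · simp [rot, vecMul, dotProduct, exp_mul_I, mul_comm I]
  · simp [rot, vecMul, dotProduct, exp_mul_I, add_mul, mul_assoc, add_comm, mul_comm I]

theorem star_isoVec_vecMul_rot (θ : ℝ) :
    star isoVec ᵥ* (rot θ).map ofReal = conj (exp (θ * I)) • star isoVec := by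
  ext i
  simpa [vecMul, dotProduct] using congrArg conj (congrFun (isoVec_vecMul_rot θ) i)

/-- The complex number `z = d'₁₁ + i d'₁₂` encoding the deviator `d'(C)` of an elasticity tensor,
written as a contraction of `C` itself so that its behaviour under rotations is immediate. -/
def devCoeff (C : Tens4) : ℂ := contract C isoVec (star isoVec) isoVec isoVec / 2

/-- The complex number `w = H₁₁₁₁ + i H₁₁₁₂` encoding the harmonic part `H(C)` of an elasticity
tensor, written as a contraction of `C` itself so that its behaviour under rotations is
immediate. -/
def harmCoeff (C : Tens4) : ℂ := contract C isoVec isoVec isoVec isoVec / 8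

theorem devCoeff_act_rot (C : Tens4) (θ : ℝ) :
    devCoeff (act (rot θ) C) = exp (θ * I) ^ 2 * devCoeff C := by
  rw [devCoeff, contract_act, isoVec_vecMul_rot, star_isoVec_vecMul_rot, contract_smul,
    exp_ofReal_mul_I_mul_conj, devCoeff]
  ring

theorem harmCoeff_act_rot (C : Tens4) (θ : ℝ) :
    harmCoeff (act (rot θ) C) = exp (θ * I) ^ 4 * harmCoeff C := by
  rw [harmCoeff, contract_act, isoVec_vecMul_rot, contract_smul, harmCoeff]
  ring

@[simp]
theorem kdelta_self (i : Fin 2) : kdelta i i = 1 := if_pos rfl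

@[simp]
theorem kdelta_zero_one : kdelta 0 1 = 0 := rfl

@[simp]
theorem kdelta_one_zero : kdelta 1 0 = 0 := rfl

theorem kdelta_comm (i j : Fin 2) : kdelta i j = kdelta j i := by
  simp only [kdelta, eq_comm]

theorem isElas_Jten : IsElas Jten := by
  refine ⟨fun i j k l ↦ ?_, fun i j k l ↦ ?_, fun i j k l ↦ ?_⟩
  · rw [Jten, Jten, kdelta_comm i j]
    ring
  · rw [Jten, Jten, kdelta_comm k l]
    ring
  · rw [Jten, Jten, kdelta_comm i k, kdelta_comm j l, kdelta_comm i l, kdelta_comm j k]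
    ring

theorem dil_Jten (i j : Fin 2) : dil Jten i j = 0 := by
  fin_cases i <;> fin_cases j <;> norm_num [dil, Jten]

theorem Jten_eq_re (i j k l : Fin 2) :
    Jten i j k l = (isoVec i * isoVec j * conj (isoVec k * isoVec l)).re / 2 := by
  fin_cases i <;> fin_cases j <;> fin_cases k <;> fin_cases l <;> norm_num [Jten]

theorem trace_devC (C : Tens4) : devC C 0 0 + devC C 1 1 = 0 := by
  simp only [devC, Fin.sum_univ_two, kdelta_self]
  ring

theorem dil_harmC (C : Tens4) (i j : Fin 2) : dil (harmC C) i j = 0 := by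
  have htrace := trace_devC C
  have hdil : dil C i j = devC C i j + 2 * kappaC C * kdelta i j := by
    rw [devC, kappaC]
    ring
  have hJ := dil_Jten i j
  rw [dil, Fin.sum_univ_two] at hdil hJ ⊢
  simp only [harmC, kdelta_self]
  linear_combination hdil - 2 * muC C * hJ - kdelta i j / 2 * htrace

theorem trace_voigt_harmC (C : Tens4) : ∑ i, voigt (harmC C) i i = 0 := by
  simp only [voigt, harmC, muC, kappaC, dil, devC, Jten, Fin.sum_univ_two, kdelta_self,
    kdelta_zero_one, kdelta_one_zero]
  ring

theorem harmCoeff_harmC (C : Tens4) : harmCoeff (harmC C) = harmCoeff C := by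
  simp only [harmCoeff, contract, harmC, Jten, Fin.sum_univ_two, isoVec_zero, isoVec_one,
    kdelta_self, kdelta_zero_one, kdelta_one_zero]
  push_cast
  -- Each delta contributes a factor `e · e = 1 + I ^ 2`; the rest of its term is the coefficient.
  linear_combination (-1 / 8) * ((muC C + kappaC C) * (1 + I ^ 2) +
    (devC C 0 0 + I * (devC C 0 1 + devC C 1 0) + I ^ 2 * devC C 1 1)) * I_sq

namespace IsElas

variable {C : Tens4} (hC : IsElas C)
include hC

theorem isElas_act (g : Matrix (Fin 2) (Fin 2) ℝ) : IsElas (act g C) := by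
  obtain ⟨hl, hr, hm⟩ := hC
  refine ⟨fun i j k l ↦ ?_, fun i j k l ↦ ?_, fun i j k l ↦ ?_⟩
  · simp only [act]
    rw [Finset.sum_comm]
    congr! 4
    rw [hl]
    ring
  · simp only [act]
    congr! 2
    rw [Finset.sum_comm]
    congr! 2
    rw [hr]
    ring
  · simp only [act, Fin.sum_univ_two, hl 1 0, hr _ _ 1 0, hm 0 1 0 0, hm 1 1 0 0, hm 1 1 0 1]
    ring

theorem dil_symm (i j : Fin 2) : dil C i j = dil C j i := by
  simp only [dil, hC.2.1 _ _ i j]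

theorem devC_symm (i j : Fin 2) : devC C i j = devC C j i := by
  rw [devC, devC, hC.dil_symm, kdelta_comm]

theorem devC_zero_one : devC C 0 1 = C 0 0 0 1 + C 0 1 1 1 := by
  rw [devC, dil, Fin.sum_univ_two, hC.2.2 1 1, kdelta_zero_one, mul_zero, sub_zero]

theorem isElas_harmC : IsElas (harmC C) := by
  refine ⟨fun i j k l ↦ ?_, fun i j k l ↦ ?_, fun i j k l ↦ ?_⟩
  · rw [harmC, harmC, hC.1, isElas_Jten.1, kdelta_comm i j, hC.devC_symm i j]
  · rw [harmC, harmC, hC.2.1, isElas_Jten.2.1, kdelta_comm k l, hC.devC_symm k l]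
  · rw [harmC, harmC, hC.2.2, isElas_Jten.2.2]
    ring

theorem sum_isoVec_mul_isoVec_mul_dil :
    ∑ i, ∑ j, isoVec i * isoVec j * dil C i j = 2 * devCoeff C := by
  simp only [devCoeff, contract, dil, Fin.sum_univ_two, isoVec_zero, isoVec_one, Pi.star_apply,
    star_def, map_one, conj_I, hC.1 1 0]
  push_cast
  linear_combination (C 1 1 0 0 + I * (C 1 1 0 1 + C 1 1 1 0) + I ^ 2 * C 1 1 1 1) * I_sq

theorem devCoeff_eq : devCoeff C = devC C 0 0 + devC C 0 1 * I := by
  have h := hC.sum_isoVec_mul_isoVec_mul_dil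
  simp only [Fin.sum_univ_two, isoVec_zero, isoVec_one, hC.dil_symm 1 0] at h
  simp only [devC, Fin.sum_univ_two, kdelta_self, kdelta_zero_one]
  push_cast
  linear_combination (-1 / 2) * h + (1 / 2) * dil C 1 1 * I_sq

theorem devC_eq_re (i j : Fin 2) :
    devC C i j = (devCoeff C * conj (isoVec i * isoVec j)).re := by
  have h11 : devC C 1 1 = -devC C 0 0 := by linarith [trace_devC C]
  rw [hC.devCoeff_eq]
  fin_cases i <;> fin_cases j <;> simp [hC.devC_symm 1 0, h11]

theorem eq_re_of_traceless (hd : ∀ i j, dil C i j = 0) (hv : ∑ i, voigt C i i = 0)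
    (i j k l : Fin 2) :
    C i j k l = (harmCoeff C * conj (isoVec i * isoVec j * isoVec k * isoVec l)).re := by
  obtain ⟨hl, hr, hm⟩ := hC
  simp only [dil, voigt, Fin.sum_univ_two] at hd hv
  have h0011 : C 0 0 1 1 = -C 0 0 0 0 := by linarith [hd 0 0, hm 1 1 0 0]
  have h1111 : C 1 1 1 1 = C 0 0 0 0 := by linarith [hd 1 1]
  have h0111 : C 0 1 1 1 = -C 0 0 0 1 := by linarith [hd 0 1, hm 1 1 0 1]
  have h0101 : C 0 1 0 1 = -C 0 0 0 0 := by linarith [hl 1 0 1 0, hr 0 1 1 0]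
  have hcoeff : harmCoeff C = C 0 0 0 0 + C 0 0 0 1 * I := by
    simp only [harmCoeff, contract, Fin.sum_univ_two, isoVec_zero, isoVec_one, hl 1 0,
      hr _ _ 1 0, hm 0 1 0 0, hm 1 1 0 0, hm 1 1 0 1, h0011, h1111, h0111, h0101]
    push_cast
    linear_combination (C 0 0 0 0 * (I ^ 2 - 7) / 8 - C 0 0 0 1 * I / 2) * I_sq
  rw [hcoeff]
  fin_cases i <;> fin_cases j <;> fin_cases k <;> fin_cases l <;>
    simp [hl 1 0, hr _ _ 1 0, hm 0 1 0 0, hm 1 1 0 0, hm 1 1 0 1, h0011, h1111, h0111, h0101]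

theorem harmC_eq_re (i j k l : Fin 2) :
    harmC C i j k l =
      (harmCoeff C * conj (isoVec i * isoVec j * isoVec k * isoVec l)).re := by
  rw [← harmCoeff_harmC]
  exact hC.isElas_harmC.eq_re_of_traceless (dil_harmC C) (trace_voigt_harmC C) i j k l

theorem devCoeff_im : (devCoeff C).im = C 0 0 0 1 + C 0 1 1 1 := by
  simp [hC.devCoeff_eq, hC.devC_zero_one]

theorem harmCoeff_im : (harmCoeff C).im = (C 0 0 0 1 - C 0 1 1 1) / 2 := by
  have h : harmC C 0 0 0 1 = (harmCoeff C).im := by simp [hC.harmC_eq_re]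
  rw [← h]
  simp only [harmC, Jten, kdelta_self, kdelta_zero_one, hC.devC_zero_one]
  ring

theorem im_harmCoeff_mul_conj_devCoeff_sq (h : IsOrtho C) :
    (harmCoeff C * conj (devCoeff C) ^ 2).im = 0 := by
  obtain ⟨θ, h0001, h0111⟩ := h
  have hθ := hC.isElas_act (rot θ)
  apply im_mul_conj_sq_eq_zero (exp_ofReal_mul_I_mul_conj θ)
  · rw [← devCoeff_act_rot, hθ.devCoeff_im, h0001, h0111, add_zero]
  · rw [← harmCoeff_act_rot, hθ.harmCoeff_im, h0001, h0111, sub_zero, zero_div]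

theorem devCoeff_ne_zero (hd : devC C ≠ 0) : devCoeff C ≠ 0 := by
  contrapose! hd
  ext i j
  simp [hC.devC_eq_re, hd]

theorem I2_eq : I2 C = 2 * normSq (devCoeff C) := by
  rw [hC.devCoeff_eq, normSq_add_mul_I]
  simp only [I2, Fin.sum_univ_two, hC.devC_symm 1 0]
  linear_combination (devC C 1 1 - devC C 0 0) * trace_devC C

theorem K3_eq : K3 C = 4 * (harmCoeff C * conj (devCoeff C) ^ 2).re := by
  let e := isoVec
  calc K3 C
      = (∑ i, ∑ j, ∑ k, ∑ l, harmCoeff C *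
          conj ((e i * e j * dil C i j) * (e k * e l * dil C k l))).re := by
        simp only [K3, re_sum, hC.harmC_eq_re]
        congr! 4 with i _ j _ k _ l
        rw [mul_comm, ← re_ofReal_mul, ← re_ofReal_mul]
        simp only [e, map_mul, conj_ofReal]
        ring_nf
    _ = (harmCoeff C * conj (∑ i, ∑ j, e i * e j * dil C i j) ^ 2).re := by
        simp only [← Finset.mul_sum, ← Finset.sum_mul, map_sum, map_mul, pow_two]
    _ = ((4 : ℝ) * (harmCoeff C * conj (devCoeff C) ^ 2)).re := by
        rw [hC.sum_isoVec_mul_isoVec_mul_dil, map_mul, map_ofNat]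
        push_cast
        ring_nf
    _ = 4 * (harmCoeff C * conj (devCoeff C) ^ 2).re := re_ofReal_mul _ _

theorem devC_mul_devC_sub (i j k l : Fin 2) :
    devC C i j * devC C k l - I2 C / 2 * Jten i j k l =
      (devCoeff C ^ 2 * conj (isoVec i * isoVec j * isoVec k * isoVec l)).re / 2 := by
  set z := devCoeff C with hz
  have hsq : z * conj (isoVec i * isoVec j) * (z * conj (isoVec k * isoVec l)) =
      z ^ 2 * conj (isoVec i * isoVec j * isoVec k * isoVec l) := by
    simp only [map_mul]
    ring
  have hnorm : z * conj (isoVec i * isoVec j) * conj (z * conj (isoVec k * isoVec l)) =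
      normSq z * conj (isoVec i * isoVec j * conj (isoVec k * isoVec l)) := by
    rw [← mul_conj]
    simp only [map_mul]
    ring
  rw [hC.devC_eq_re, hC.devC_eq_re, ← hz, re_mul_re, hsq, hnorm, re_ofReal_mul, conj_re,
    Jten_eq_re, hC.I2_eq]
  ring

end IsElas

/-- Reconstruction of an orthotropic 2D elasticity tensor from its
invariants `μ, κ, I₂, K₃` and its second-order covariant `d'(C)`. -/
theorem orthotropic_reconstruction (C : Tens4) (hC : IsElas C)
    (horth : IsOrtho C) (hd : devC C ≠ 0) :
    ∀ i j k l, C i j k l =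
      2 * muC C * Jten i j k l + kappaC C * kdelta i j * kdelta k l
        + (kdelta i j * devC C k l + devC C i j * kdelta k l) / 2
        + 2 * K3 C / (I2 C) ^ 2
          * (devC C i j * devC C k l - I2 C / 2 * Jten i j k l) := by
  intro i j k l
  have hcoeff := eq_ofReal_mul_sq_of_im_mul_conj_sq_eq_zero (hC.devCoeff_ne_zero hd)
    (hC.im_harmCoeff_mul_conj_devCoeff_sq horth)
  have hratio : (harmCoeff C * conj (devCoeff C) ^ 2).re / normSq (devCoeff C) ^ 2 =
      K3 C / I2 C ^ 2 := by
    rw [hC.K3_eq, hC.I2_eq]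
    ring
  have hharm : harmC C i j k l =
      2 * K3 C / I2 C ^ 2 * (devC C i j * devC C k l - I2 C / 2 * Jten i j k l) := by
    rw [hC.harmC_eq_re, hcoeff, hratio, mul_assoc, re_ofReal_mul, hC.devC_mul_devC_sub]
    ring
  rw [← hharm, harmC]
  ring
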